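/- Let f : ℝ² → ℝ be a smooth function with compact support. Then there exist constants C > 0 and ε₀ > 0 such that for all 0 < ε < ε₀, | ∫₀^∞∫₀^∞ f(a,b)·(2πε)^{−1/2}·e^{−(a−b)²/(2ε)} da db − ∫₀^∞ f(c,c) dc + √(ε/(2π))·f(0,0) | ≤ C·ε. In other words, as ε → 0⁺, ∫₀^∞∫₀^∞ f(a,b)·e^{−(a−b)²/(2ε)}/√(2πε) da db = ∫₀^∞ f(c,c) dc − √(ε/(2π))·f(0,0) + O(ε). -/

import Mathlib

open Real MeasureTheory

/-- The centred Gaussian density of variance `ε`. -/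
noncomputable def gaussianKernel (ε u : ℝ) : ℝ :=
  (2 * π * ε) ^ (-(1 : ℝ) / 2) * Real.exp (-u ^ 2 / (2 * ε))

section GaussianKernel

variable {ε : ℝ}

lemma gaussianKernel_eq (hε : 0 < ε) (u : ℝ) :
    gaussianKernel ε u = (√(2 * π * ε))⁻¹ * Real.exp (-(2 * ε)⁻¹ * u ^ 2) := by
  have h : 0 < 2 * π * ε := by positivity
  rw [gaussianKernel, show (-(1 : ℝ) / 2) = -(1 / 2) by norm_num, rpow_neg h.le, ← sqrt_eq_rpow]
  congr 2
  field_simp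

lemma gaussianKernel_nonneg (hε : 0 < ε) (u : ℝ) : 0 ≤ gaussianKernel ε u := by
  unfold gaussianKernel
  positivity

lemma gaussianKernel_neg (u : ℝ) : gaussianKernel ε (-u) = gaussianKernel ε u := by
  simp [gaussianKernel]

lemma continuous_gaussianKernel : Continuous (gaussianKernel ε) := by
  unfold gaussianKernel
  fun_prop

lemma integrableOn_pow_mul_gaussianKernel (hε : 0 < ε) (n : ℕ) :
    IntegrableOn (fun u ↦ u ^ n * gaussianKernel ε u) (Set.Ioi 0) := by
  have hb : 0 < (2 * ε)⁻¹ := by positivity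
  have hn : (-1 : ℝ) < n := by linarith [n.cast_nonneg (α := ℝ)]
  refine ((integrableOn_rpow_mul_exp_neg_mul_sq hb hn).const_mul (√(2 * π * ε))⁻¹).congr
    (.of_forall fun u ↦ ?_)
  simp only [gaussianKernel_eq hε, rpow_natCast]
  ring

lemma integral_pow_mul_gaussianKernel (hε : 0 < ε) (n : ℕ) :
    ∫ u in Set.Ioi 0, u ^ n * gaussianKernel ε u =
      (√(2 * π * ε))⁻¹ *
        ((2 * ε)⁻¹ ^ (-((n : ℝ) + 1) / 2) * (1 / 2) * Real.Gamma (((n : ℝ) + 1) / 2)) := by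
  have hb : 0 < (2 * ε)⁻¹ := by positivity
  have hn : (-1 : ℝ) < n := by linarith [n.cast_nonneg (α := ℝ)]
  rw [← integral_rpow_mul_exp_neg_mul_rpow two_pos hn hb, ← integral_const_mul]
  refine integral_congr_ae (.of_forall fun u ↦ ?_)
  simp only [gaussianKernel_eq hε, rpow_natCast, rpow_two]
  ring

lemma integral_gaussianKernel (hε : 0 < ε) :
    ∫ u in Set.Ioi 0, gaussianKernel ε u = 1 / 2 := by
  have h : 0 < 2 * π * ε := by positivity
  simp only [gaussianKernel_eq hε]
  rw [integral_const_mul, integral_gaussian_Ioi, div_inv_eq_mul,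
    show π * (2 * ε) = 2 * π * ε by ring]
  have := sqrt_pos.2 h
  field_simp

lemma integral_mul_gaussianKernel (hε : 0 < ε) :
    ∫ u in Set.Ioi 0, u * gaussianKernel ε u = √(ε / (2 * π)) := by
  have h : 0 < 2 * π * ε := by positivity
  have key := integral_pow_mul_gaussianKernel hε 1
  simp only [pow_one] at key
  rw [key, show -(((1 : ℕ) : ℝ) + 1) / 2 = -1 by norm_num,
    show (((1 : ℕ) : ℝ) + 1) / 2 = 1 by norm_num, Gamma_one, rpow_neg_one, inv_inv,
    inv_mul_eq_iff_eq_mul₀ (sqrt_pos.2 h).ne', ← sqrt_mul h.le,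
    show 2 * π * ε * (ε / (2 * π)) = ε ^ 2 by field_simp, sqrt_sq hε.le]
  ring

lemma integral_sq_mul_gaussianKernel (hε : 0 < ε) :
    ∫ u in Set.Ioi 0, u ^ 2 * gaussianKernel ε u = ε / 2 := by
  have h : 0 < 2 * π * ε := by positivity
  have h2 : 0 < 2 * ε := by positivity
  rw [integral_pow_mul_gaussianKernel hε 2,
    show (((2 : ℕ) : ℝ) + 1) / 2 = 1 / 2 + 1 by norm_num,
    show -(((2 : ℕ) : ℝ) + 1) / 2 = -(1 / 2 + 1) by norm_num,
    Gamma_add_one (by norm_num), Gamma_one_half_eq, rpow_neg (by positivity),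
    inv_rpow h2.le, inv_inv, rpow_add h2, rpow_one, ← sqrt_eq_rpow,
    show 2 * π * ε = 2 * ε * π by ring, sqrt_mul h2.le]
  have := sqrt_pos.2 h2
  have := sqrt_pos.2 pi_pos
  field_simp

/-- A first-order expansion of `h` at `0⁺` turns into an expansion of its Gaussian average over
the half-line. -/
lemma abs_integral_mul_gaussianKernel_sub_le (hε : 0 < ε) {h : ℝ → ℝ} {α β K : ℝ}
    (hh : IntegrableOn (fun u ↦ h u * gaussianKernel ε u) (Set.Ioi 0))
    (hK : ∀ u > 0, |h u - α - u * β| ≤ K * u ^ 2) :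
    |(∫ u in Set.Ioi 0, h u * gaussianKernel ε u) - α / 2 - √(ε / (2 * π)) * β| ≤
      K * (ε / 2) := by
  have h0 := (integrableOn_pow_mul_gaussianKernel hε 0).const_mul α
  have h1 := (integrableOn_pow_mul_gaussianKernel hε 1).const_mul β
  have h2 := (integrableOn_pow_mul_gaussianKernel hε 2).const_mul K
  simp only [pow_zero, one_mul, pow_one] at h0 h1
  have key : (∫ u in Set.Ioi 0, h u * gaussianKernel ε u) - α / 2 - √(ε / (2 * π)) * β =
      ∫ u in Set.Ioi 0, (h u * gaussianKernel ε u - α * gaussianKernel ε u -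
        β * (u * gaussianKernel ε u)) := by
    rw [integral_sub (by exact hh.sub h0) h1, integral_sub hh h0, integral_const_mul,
      integral_const_mul,
      integral_gaussianKernel hε, integral_mul_gaussianKernel hε]
    ring
  rw [key, ← integral_sq_mul_gaussianKernel hε, ← integral_const_mul, ← norm_eq_abs]
  refine norm_integral_le_of_norm_le h2 ((ae_restrict_iff' measurableSet_Ioi).2
    (.of_forall fun u hu ↦ ?_))
  have hg := gaussianKernel_nonneg hε u
  rw [show h u * gaussianKernel ε u - α * gaussianKernel ε u - β * (u * gaussianKernel ε u) =
    (h u - α - u * β) * gaussianKernel ε u by ring, norm_mul, norm_eq_abs, norm_of_nonneg hg,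
    ← mul_assoc]
  exact mul_le_mul_of_nonneg_right (hK u hu) hg

end GaussianKernel

section QuarterPlane

variable {F : ℝ × ℝ → ℝ}

lemma HasCompactSupport.prodMk_left {X Y M : Type*} [TopologicalSpace X] [TopologicalSpace Y]
    [R1Space Y] [Zero M] {G : X × Y → M} (hG : HasCompactSupport G) (x : X) :
    HasCompactSupport fun y ↦ G (x, y) := by
  refine HasCompactSupport.intro (hG.isCompact.image continuous_snd) fun y hy ↦ ?_
  by_contra h
  exact hy ⟨(x, y), subset_tsupport _ h, rfl⟩

lemma HasCompactSupport.comp_swap {X Y M : Type*} [TopologicalSpace X] [TopologicalSpace Y]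
    [Zero M] {G : X × Y → M} (hG : HasCompactSupport G) : HasCompactSupport (G ∘ Prod.swap) :=
  hG.comp_homeomorph (Homeomorph.prodComm Y X)

lemma integrableOn_shear (hF : Continuous F) (hs : HasCompactSupport F) (c : ℝ) :
    IntegrableOn (fun u ↦ F (c, c + u)) (Set.Ioi 0) :=
  (((hF.comp (by fun_prop : Continuous fun y : ℝ ↦ (c, y))).integrable_of_hasCompactSupport
    (hs.prodMk_left c)).comp_add_left c).integrableOn

lemma integrableOn_integral_shear (hF : Continuous F) (hs : HasCompactSupport F) :
    IntegrableOn (fun c ↦ ∫ u in Set.Ioi 0, F (c, c + u)) (Set.Ioi 0) := by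
  have h := (measurePreserving_prod_add (volume : Measure ℝ)
    (volume : Measure ℝ)).integrable_comp_of_integrable (hF.integrable_of_hasCompactSupport hs)
  refine Integrable.integral_prod_left (f := fun z : ℝ × ℝ ↦ F (z.1, z.1 + z.2)) ?_
  rw [Measure.prod_restrict]
  exact h.integrableOn

lemma setIntegral_Ioi_shear (G : ℝ → ℝ) (c : ℝ) :
    ∫ b in Set.Ioi c, G b = ∫ u in Set.Ioi 0, G (c + u) := by
  rw [← (measurePreserving_add_left volume c).setIntegral_preimage_emb
    (measurableEmbedding_addLeft c) G (Set.Ioi c)]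
  simp

/-- Integration over the part of the quarter-plane above the diagonal, in sheared coordinates. -/
lemma integral_quarterPlane_above (F : ℝ × ℝ → ℝ) :
    ∫ a in Set.Ioi (0 : ℝ), ∫ b in Set.Ioi (0 : ℝ), {p : ℝ × ℝ | p.1 < p.2}.indicator F (a, b) =
      ∫ c in Set.Ioi (0 : ℝ), ∫ u in Set.Ioi (0 : ℝ), F (c, c + u) := by
  refine setIntegral_congr_fun measurableSet_Ioi fun a ha ↦ ?_
  have : (fun b ↦ {p : ℝ × ℝ | p.1 < p.2}.indicator F (a, b)) =
      (Set.Ioi a).indicator fun b ↦ F (a, b) := by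
    ext b
    simp [Set.indicator]
  simp only [this]
  rw [setIntegral_indicator measurableSet_Ioi,
    Set.inter_eq_right.2 (Set.Ioi_subset_Ioi (le_of_lt ha)), setIntegral_Ioi_shear]

lemma integral_quarterPlane_eq (hF : Continuous F) (hs : HasCompactSupport F) :
    ∫ a in Set.Ioi (0 : ℝ), ∫ b in Set.Ioi (0 : ℝ), F (a, b) =
      ∫ c in Set.Ioi (0 : ℝ), ∫ u in Set.Ioi (0 : ℝ), (F (c, c + u) + F (c + u, c)) := by
  have hF' : Continuous (F ∘ Prod.swap) := hF.comp continuous_swap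
  have hs' := hs.comp_swap
  have hint : Integrable F (volume.prod volume) := hF.integrable_of_hasCompactSupport hs
  have hU : MeasurableSet {p : ℝ × ℝ | p.1 < p.2} := measurableSet_lt measurable_fst measurable_snd
  have hV : MeasurableSet {p : ℝ × ℝ | p.2 < p.1} := measurableSet_lt measurable_snd measurable_fst
  have int_restrict {s : Set (ℝ × ℝ)} (h : MeasurableSet s) :
      Integrable (s.indicator F)
        ((volume.restrict (Set.Ioi 0)).prod (volume.restrict (Set.Ioi 0))) := by
    rw [Measure.prod_restrict]
    exact (hint.indicator h).integrableOn
  have split (a : ℝ) : ∫ b in Set.Ioi (0 : ℝ), F (a, b) =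
      (∫ b in Set.Ioi (0 : ℝ), {p : ℝ × ℝ | p.1 < p.2}.indicator F (a, b)) +
      ∫ b in Set.Ioi (0 : ℝ), {p : ℝ × ℝ | p.2 < p.1}.indicator F (a, b) := by
    have ha : Integrable fun b ↦ F (a, b) :=
      (hF.comp (by fun_prop : Continuous fun y : ℝ ↦ (a, y))).integrable_of_hasCompactSupport
        (hs.prodMk_left a)
    have e1 : (fun b ↦ {p : ℝ × ℝ | p.1 < p.2}.indicator F (a, b)) =
        (Set.Ioi a).indicator fun b ↦ F (a, b) := by
      ext b
      simp [Set.indicator]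
    have e2 : (fun b ↦ {p : ℝ × ℝ | p.2 < p.1}.indicator F (a, b)) =
        (Set.Iio a).indicator fun b ↦ F (a, b) := by
      ext b
      simp [Set.indicator]
    rw [e1, e2, ← integral_add (ha.indicator measurableSet_Ioi).integrableOn
      (ha.indicator measurableSet_Iio).integrableOn]
    refine integral_congr_ae (ae_restrict_of_ae ?_)
    filter_upwards [Measure.ae_ne volume a] with b hb
    rcases lt_or_gt_of_ne hb with h | h <;> simp [h, not_lt.2 h.le]
  have below : ∫ a in Set.Ioi (0 : ℝ), ∫ b in Set.Ioi (0 : ℝ),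
      {p : ℝ × ℝ | p.2 < p.1}.indicator F (a, b) =
      ∫ c in Set.Ioi (0 : ℝ), ∫ u in Set.Ioi (0 : ℝ), (F ∘ Prod.swap) (c, c + u) := by
    rw [integral_integral_swap (f := fun a b ↦ {p : ℝ × ℝ | p.2 < p.1}.indicator F (a, b))
      (int_restrict hV), ← integral_quarterPlane_above]
    rfl
  simp only [split]
  rw [integral_add (int_restrict hU).integral_prod_left (int_restrict hV).integral_prod_left,
    below, integral_quarterPlane_above, ← integral_add (integrableOn_integral_shear hF hs)
      (integrableOn_integral_shear hF' hs')]
  refine integral_congr_ae (.of_forall fun c ↦ ?_)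
  exact (integral_add (integrableOn_shear hF hs c) (integrableOn_shear hF' hs' c)).symm

end QuarterPlane

lemma abs_sub_fderiv_le_of_lipschitzWith {E : Type*} [NormedAddCommGroup E] [NormedSpace ℝ E]
    {f : E → ℝ} {L : NNReal} (hf : Differentiable ℝ f) (hL : LipschitzWith L (fderiv ℝ f))
    (x v : E) : |f (x + v) - f x - fderiv ℝ f x v| ≤ L * ‖v‖ ^ 2 := by
  have h := (convex_closedBall x ‖v‖).norm_image_sub_le_of_norm_fderiv_le' (𝕜 := ℝ) (f := f)
    (φ := fderiv ℝ f x) (C := L * ‖v‖) (x := x) (y := x + v) (fun z _ ↦ hf z)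
    (fun z hz ↦ (hL.norm_sub_le z x).trans
      (mul_le_mul_of_nonneg_left (mem_closedBall_iff_norm.1 hz) L.2))
    (Metric.mem_closedBall_self (norm_nonneg v)) (by simp)
  simpa [pow_two, mul_assoc] using h

/-- Gaussian-smoothing asymptotics on the quarter-plane: for a smooth compactly
supported `f : ℝ² → ℝ`, as `ε → 0⁺`,
`∫₀^∞∫₀^∞ f(a,b)·(2πε)^{−1/2}·e^{−(a−b)²/(2ε)} da db
  = ∫₀^∞ f(c,c) dc − √(ε/(2π))·f(0,0) + O(ε)`. -/
theorem gaussian_smoothing_quarter_plane_asymptotics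
    (f : ℝ × ℝ → ℝ) (hf : ContDiff ℝ (⊤ : ℕ∞) f) (hsupp : HasCompactSupport f) :
    ∃ C > (0 : ℝ), ∃ ε₀ > (0 : ℝ), ∀ ε : ℝ, 0 < ε → ε < ε₀ →
      |(∫ a in Set.Ioi (0 : ℝ), ∫ b in Set.Ioi (0 : ℝ),
            f (a, b) * (2 * π * ε) ^ (-(1 : ℝ) / 2) * Real.exp (-(a - b) ^ 2 / (2 * ε))) -
          (∫ c in Set.Ioi (0 : ℝ), f (c, c)) +
          Real.sqrt (ε / (2 * π)) * f (0, 0)| ≤ C * ε := by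
  have hd : Differentiable ℝ f := hf.differentiable (by simp)
  obtain ⟨L, hL⟩ := ContDiff.lipschitzWith_of_hasCompactSupport (hsupp.fderiv ℝ)
    (hf.fderiv_right (m := 1) (by norm_cast)) one_ne_zero
  obtain ⟨R₀, hR₀⟩ := hsupp.isCompact.isBounded.subset_closedBall 0
  set R := max R₀ 0
  have hfar (p : ℝ × ℝ) (hp : R < p.1 ∨ R < p.2) : p ∉ tsupport f := fun h ↦ by
    have h1 := mem_closedBall_zero_iff.1 (hR₀ h)
    have h2 := (norm_fst_le p).trans h1
    have h3 := (norm_snd_le p).trans h1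
    have h4 : R₀ ≤ R := le_max_left _ _
    rcases hp with hp | hp
    · linarith [le_abs_self p.1, norm_eq_abs p.1]
    · linarith [le_abs_self p.2, norm_eq_abs p.2]
  have hdiag : ContDiff ℝ 1 fun c : ℝ ↦ f (c, c) :=
    (hf.of_le (by norm_cast)).comp (contDiff_id.prodMk contDiff_id)
  have hdiags : HasCompactSupport fun c : ℝ ↦ f (c, c) := by
    refine HasCompactSupport.intro (hsupp.isCompact.image continuous_fst) fun y hy ↦ ?_
    by_contra h
    exact hy ⟨(y, y), subset_tsupport _ h, rfl⟩
  have hderiv (c : ℝ) : deriv (fun c : ℝ ↦ f (c, c)) c = fderiv ℝ f (c, c) (1, 1) :=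
    ((hd (c, c)).hasFDerivAt.comp_hasDerivAt (f := fun x : ℝ ↦ (x, x)) c
      ((hasDerivAt_id c).prodMk (hasDerivAt_id c))).deriv
  have hFTC := hdiags.integral_Ioi_deriv_eq hdiag 0
  have hdint : Integrable (deriv fun c : ℝ ↦ f (c, c)) :=
    (hdiag.continuous_deriv le_rfl).integrable_of_hasCompactSupport hdiags.deriv
  have hαint : Integrable fun c : ℝ ↦ f (c, c) :=
    hdiag.continuous.integrable_of_hasCompactSupport hdiags
  have hTaylor (c u : ℝ) (hu : 0 < u) : |f (c, c + u) + f (c + u, c) - 2 * f (c, c) -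
      u * deriv (fun c : ℝ ↦ f (c, c)) c| ≤ 2 * L * u ^ 2 := by
    have h1 := abs_sub_fderiv_le_of_lipschitzWith hd hL (c, c) (0, u)
    have h2 := abs_sub_fderiv_le_of_lipschitzWith hd hL (c, c) (u, 0)
    have h3 : u * deriv (fun c : ℝ ↦ f (c, c)) c =
        fderiv ℝ f (c, c) (0, u) + fderiv ℝ f (c, c) (u, 0) := by
      rw [hderiv, ← map_add, ← smul_eq_mul, ← map_smul]
      simp
    simp only [Prod.mk_add_mk, add_zero, Prod.norm_mk, norm_zero, norm_eq_abs, abs_nonneg,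
      sup_of_le_left, sup_of_le_right, sq_abs] at h1 h2
    rw [h3]
    calc _ = |(f (c, c + u) - f (c, c) - fderiv ℝ f (c, c) (0, u)) +
          (f (c + u, c) - f (c, c) - fderiv ℝ f (c, c) (u, 0))| := by ring_nf
      _ ≤ _ := (abs_add_le _ _).trans (by linarith)
  refine ⟨L * R + 1, by positivity, 1, one_pos, fun ε hε _ ↦ ?_⟩
  set F : ℝ × ℝ → ℝ := fun p ↦ f p * gaussianKernel ε (p.2 - p.1)
  have hF : Continuous F := hf.continuous.mul (continuous_gaussianKernel.comp (by fun_prop))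
  have hFs : HasCompactSupport F := hsupp.mul_right
  have hF' : Continuous (F ∘ Prod.swap) := hF.comp continuous_swap
  have hFc (c u : ℝ) : F (c, c + u) + F (c + u, c) =
      (f (c, c + u) + f (c + u, c)) * gaussianKernel ε u := by
    have : c - (c + u) = -u := by ring
    simp only [F, add_sub_cancel_left, this, gaussianKernel_neg]
    ring
  have hI : ∫ a in Set.Ioi (0 : ℝ), ∫ b in Set.Ioi (0 : ℝ),
      f (a, b) * (2 * π * ε) ^ (-(1 : ℝ) / 2) * Real.exp (-(a - b) ^ 2 / (2 * ε)) =
      ∫ c in Set.Ioi (0 : ℝ), ∫ u in Set.Ioi (0 : ℝ),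
        (f (c, c + u) + f (c + u, c)) * gaussianKernel ε u := by
    simp only [← hFc]
    rw [← integral_quarterPlane_eq hF hFs]
    simp only [F, gaussianKernel, mul_assoc, sub_sq_comm]
  have hinner (c : ℝ) : IntegrableOn
      (fun u ↦ (f (c, c + u) + f (c + u, c)) * gaussianKernel ε u) (Set.Ioi 0) := by
    simp only [← hFc]
    exact (integrableOn_shear hF hFs c).add (integrableOn_shear hF' hFs.comp_swap c)
  have houter : IntegrableOn (fun c ↦ ∫ u in Set.Ioi (0 : ℝ),
      (f (c, c + u) + f (c + u, c)) * gaussianKernel ε u) (Set.Ioi 0) := by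
    refine ((integrableOn_integral_shear hF hFs).add
      (integrableOn_integral_shear hF' hFs.comp_swap)).congr (.of_forall fun c ↦ ?_)
    simp only [← hFc]
    exact (integral_add (integrableOn_shear hF hFs c)
      (integrableOn_shear hF' hFs.comp_swap c)).symm
  have hbound (c : ℝ) (hc : 0 < c) : ‖(∫ u in Set.Ioi (0 : ℝ),
      (f (c, c + u) + f (c + u, c)) * gaussianKernel ε u) - f (c, c) -
        √(ε / (2 * π)) * deriv (fun c : ℝ ↦ f (c, c)) c‖ ≤
      (Set.Ioc 0 R).indicator (fun _ ↦ L * ε) c := by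
    by_cases hcR : c ≤ R
    · have h := abs_integral_mul_gaussianKernel_sub_le hε (hinner c) (hTaylor c)
      rw [Set.indicator_of_mem (show c ∈ Set.Ioc 0 R from ⟨hc, hcR⟩)]
      rw [mul_div_cancel_left₀ _ two_ne_zero] at h
      exact h.trans_eq (by ring)
    · have hcR := not_le.1 hcR
      have h1 (u : ℝ) : f (c, c + u) = 0 := image_eq_zero_of_notMem_tsupport (hfar _ (.inl hcR))
      have h2 (u : ℝ) : f (c + u, c) = 0 := image_eq_zero_of_notMem_tsupport (hfar _ (.inr hcR))
      have h3 : f (c, c) = 0 := image_eq_zero_of_notMem_tsupport (hfar _ (.inl hcR))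
      have h4 : fderiv ℝ f (c, c) = 0 := image_eq_zero_of_notMem_tsupport
        fun h ↦ hfar (c, c) (.inl hcR) (tsupport_fderiv_subset ℝ h)
      simp [h1, h2, h3, hderiv, h4, Set.indicator_of_notMem, hcR]
  have key : (∫ c in Set.Ioi (0 : ℝ), ∫ u in Set.Ioi (0 : ℝ),
        (f (c, c + u) + f (c + u, c)) * gaussianKernel ε u) -
      (∫ c in Set.Ioi (0 : ℝ), f (c, c)) + √(ε / (2 * π)) * f (0, 0) =
      ∫ c in Set.Ioi (0 : ℝ), ((∫ u in Set.Ioi (0 : ℝ),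
        (f (c, c + u) + f (c + u, c)) * gaussianKernel ε u) - f (c, c) -
          √(ε / (2 * π)) * deriv (fun c : ℝ ↦ f (c, c)) c) := by
    rw [integral_sub (by exact houter.sub hαint.integrableOn) (hdint.integrableOn.const_mul _),
      integral_sub houter hαint.integrableOn, integral_const_mul, hFTC]
    ring
  rw [hI, key, ← norm_eq_abs]
  calc _ ≤ ∫ c in Set.Ioi (0 : ℝ), (Set.Ioc 0 R).indicator (fun _ ↦ L * ε) c :=
        norm_integral_le_of_norm_le
          ((integrable_indicator_iff measurableSet_Ioc).2
            (integrableOn_const (by simp))).integrableOn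
          ((ae_restrict_iff' measurableSet_Ioi).2 (.of_forall hbound))
    _ = L * R * ε := by
      rw [setIntegral_indicator measurableSet_Ioc,
        Set.inter_eq_right.2 Set.Ioc_subset_Ioi_self, setIntegral_const,
        volume_real_Ioc_of_le (le_max_right _ _), smul_eq_mul]
      ring
    _ ≤ (L * R + 1) * ε := by linarith
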